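/- For every nonnegative integer n, there exist integers x, y, z such that n = p_5(x) + 3·p_5(y) + 9·p_5(z), where p_5(x) = (3x² − x)/2. In other words, the sum p_5 + 3p_5 + 9p_5 is universal over ℤ. -/

import Mathlib

/-- Generalized pentagonal number: `p₅(x) = (3x² − x)/2`. -/
def p5 (x : ℤ) : ℤ := (3 * x ^ 2 - x) / 2

/-!
Since `24 * p5 x + 1 = (6 * x - 1) ^ 2`, the integer `n` is represented if and only if
`24 * n + 13 = u ^ 2 + 3 * v ^ 2 + 9 * w ^ 2` with `u`, `v`, `w` odd and prime to `3`.

For `N` not divisible by `3`, Dirichlet's theorem on primes in arithmetic progressions and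
quadratic reciprocity give a positive definite integral ternary form of determinant `3`
representing `N`. By Hermite reduction such a form is equivalent to `x² + y² + 3z²` or to
`x² + 2(y² + yz + z²)`, and the latter does not represent integers congruent to `5` modulo `8`.
So `24 * n + 13 = x² + y² + 3z²`. Exactly one of `x`, `y` is divisible by `3`, and multiplying
`u + v√-3` by a sixth root of unity, which preserves `u² + 3v²`, adjusts the residues of the
variables modulo `2` and `3`.
-/

open Matrix

open scoped NumberTheorySymbols

theorem isSymm_of_posDef {n R : Type*} [Ring R] [PartialOrder R] [StarRing R] [TrivialStar R]
    {A : Matrix n n R} (hA : A.PosDef) : A.IsSymm := by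
  simpa only [IsSymm, IsHermitian, conjTranspose_eq_transpose_of_trivial] using hA.isHermitian

section Congruence

variable {n R : Type*} [Fintype n] [CommRing R]

/-- The quadratic form with Gram matrix `A` takes the value `m`. -/
def Represents (A : Matrix n n R) (m : R) : Prop :=
  ∃ v : n → R, v ⬝ᵥ A *ᵥ v = m

theorem represents_diag (A : Matrix n n R) (i : n) : Represents A (A i i) := by
  classical exact ⟨Pi.single i 1, by simp⟩

variable [DecidableEq n]

/-- Congruence of square matrices over `R`. For symmetric matrices over `ℤ` this is the classical
equivalence of integral quadratic forms, each form being encoded by its Gram matrix. -/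
def IsCongruent (A B : Matrix n n R) : Prop :=
  ∃ U : Matrix n n R, IsUnit U ∧ B = Uᵀ * A * U

namespace IsCongruent

variable {A B C : Matrix n n R}

theorem refl (A : Matrix n n R) : IsCongruent A A :=
  ⟨1, isUnit_one, by simp⟩

theorem trans (hAB : IsCongruent A B) (hBC : IsCongruent B C) : IsCongruent A C := by
  obtain ⟨U, hU, rfl⟩ := hAB
  obtain ⟨V, hV, rfl⟩ := hBC
  exact ⟨U * V, hU.mul hV, by simp only [transpose_mul, Matrix.mul_assoc]⟩

theorem of_det_isUnit {U : Matrix n n R} (hU : IsUnit U.det) : IsCongruent A (Uᵀ * A * U) :=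
  ⟨U, (isUnit_iff_isUnit_det U).mpr hU, rfl⟩

theorem submatrix_perm (A : Matrix n n R) (σ : Equiv.Perm n) :
    IsCongruent A (A.submatrix σ σ) := by
  refine ⟨(1 : Matrix n n R).submatrix (Equiv.refl n) σ,
    (isUnit_submatrix_equiv _ _).mpr isUnit_one, ?_⟩
  ext i j
  simp [mul_apply, one_apply]

theorem represents {m : R} (h : IsCongruent A B) (hm : Represents A m) : Represents B m := by
  obtain ⟨U, hU, rfl⟩ := h
  obtain ⟨v, rfl⟩ := hm
  obtain ⟨w, rfl⟩ := mulVec_surjective_iff_isUnit.mpr hU v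
  refine ⟨w, ?_⟩
  rw [← mulVec_mulVec, ← mulVec_mulVec, dotProduct_mulVec, vecMul_transpose]

theorem posDef [PartialOrder R] [StarRing R] [TrivialStar R] (h : IsCongruent A B)
    (hA : A.PosDef) : B.PosDef := by
  obtain ⟨U, hU, rfl⟩ := h
  simpa only [conjTranspose_eq_transpose_of_trivial] using
    hA.conjTranspose_mul_mul_same (mulVec_injective_of_isUnit hU)

theorem det_eq {A B : Matrix n n ℤ} (h : IsCongruent A B) : B.det = A.det := by
  obtain ⟨U, hU, rfl⟩ := h
  have hU2 : U.det ^ 2 = 1 := Int.isUnit_sq ((isUnit_iff_isUnit_det U).mp hU)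
  rw [det_mul, det_mul, det_transpose]
  linear_combination A.det * hU2

end IsCongruent

end Congruence

section Projection

variable {R : Type*} [CommRing R]

/-- The Gram matrix of the projection of the last two basis vectors to the orthogonal complement
of the first one, scaled by `A 0 0` to avoid denominators. Its row and column of index `0`
vanish. -/
def projGram (A : Matrix (Fin 3) (Fin 3) R) (i j : Fin 3) : R :=
  A 0 0 * A i j - A 0 i * A 0 j

variable {A : Matrix (Fin 3) (Fin 3) R}

theorem projGram_mul_sub_sq (hA : A.IsSymm) :
    projGram A 1 1 * projGram A 2 2 - projGram A 1 2 ^ 2 = A 0 0 * A.det := by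
  simp only [projGram, det_fin_three, hA.apply 0 1, hA.apply 0 2, hA.apply 1 2]
  ring

theorem mul_projGram_mul_dotProduct (hA : A.IsSymm) (v : Fin 3 → R) :
    A 0 0 * projGram A 1 1 * (v ⬝ᵥ A *ᵥ v) =
      projGram A 1 1 * (A 0 0 * v 0 + A 0 1 * v 1 + A 0 2 * v 2) ^ 2 +
        (projGram A 1 1 * v 1 + projGram A 1 2 * v 2) ^ 2 + A 0 0 * A.det * v 2 ^ 2 := by
  simp only [projGram, det_fin_three, dotProduct, mulVec, Fin.sum_univ_three,
    hA.apply 0 1, hA.apply 0 2, hA.apply 1 2]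
  ring

variable [LinearOrder R] [IsStrictOrderedRing R] [StarRing R] [TrivialStar R]

theorem posDef_of_leading_minors_pos (hA : A.IsSymm) (h₁ : 0 < A 0 0) (h₂ : 0 < projGram A 1 1)
    (h₃ : 0 < A.det) : A.PosDef := by
  refine .of_dotProduct_mulVec_pos
    (by rwa [IsHermitian, conjTranspose_eq_transpose_of_trivial]) fun v hv => ?_
  rw [star_trivial]
  refine pos_of_mul_pos_right ?_ (mul_pos h₁ h₂).le
  rw [mul_projGram_mul_dotProduct hA]
  by_cases hv2 : v 2 = 0
  · by_cases hv1 : v 1 = 0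
    · have hv0 : v 0 ≠ 0 := fun hv0 => hv (by ext i; fin_cases i <;> assumption)
      simp only [hv1, hv2, mul_zero, add_zero]
      positivity
    · simp only [hv2, mul_zero, add_zero]
      positivity
  · positivity

theorem projGram_one_one_pos (hA : A.PosDef) : 0 < projGram A 1 1 := by
  have hv : ![-A 0 1, A 0 0, 0] ≠ 0 := fun h => hA.diag_pos.ne' (congrFun h 1)
  have key := hA.dotProduct_mulVec_pos hv
  refine pos_of_mul_pos_right (lt_of_lt_of_eq key ?_) (hA.diag_pos (i := 0)).le
  simp only [dotProduct, mulVec, Fin.sum_univ_three, projGram, star_trivial, cons_val,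
    (isSymm_of_posDef hA).apply 0 1]
  ring

end Projection

section Reduction

/-- Lagrange's reduction condition for the binary form `a x² + 2 b x y + c y²`. -/
structure LagrangeReduced {R : Type*} [Ring R] [LinearOrder R] (a b c : R) : Prop where
  two_mul_abs_le : 2 * |b| ≤ a
  le : a ≤ c

theorem LagrangeReduced.three_mul_sq_le {R : Type*} [CommRing R] [LinearOrder R]
    [IsStrictOrderedRing R] {a b c : R} (h : LagrangeReduced a b c) :
    3 * a ^ 2 ≤ 4 * (a * c - b ^ 2) := by
  have ha : 0 ≤ a := (mul_nonneg zero_le_two (abs_nonneg b)).trans h.two_mul_abs_le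
  have hb : (2 * |b|) ^ 2 ≤ a ^ 2 := pow_le_pow_left₀ (by positivity) h.two_mul_abs_le 2
  rw [mul_pow, sq_abs] at hb
  linarith [mul_le_mul_of_nonneg_left h.le ha]

/-- Hermite's reduction condition for positive definite ternary forms: the Gram matrix of the first
two basis vectors and that of the projection along the first one are both Lagrange reduced. -/
structure HermiteReduced {R : Type*} [CommRing R] [LinearOrder R]
    (A : Matrix (Fin 3) (Fin 3) R) : Prop where
  leading : LagrangeReduced (A 0 0) (A 0 1) (A 1 1)
  projected : LagrangeReduced (projGram A 1 1) (projGram A 1 2) (projGram A 2 2)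

namespace HermiteReduced

variable {R : Type*} [CommRing R] [LinearOrder R] [IsStrictOrderedRing R]
  {A : Matrix (Fin 3) (Fin 3) R}

theorem three_mul_projGram_sq_le (h : HermiteReduced A) (hA : A.IsSymm) :
    3 * projGram A 1 1 ^ 2 ≤ 4 * (A 0 0 * A.det) := by
  rw [← projGram_mul_sub_sq hA]
  exact h.projected.three_mul_sq_le

theorem twentySeven_mul_pow_three_le (h : HermiteReduced A) (hA : A.IsSymm) (hpos : 0 < A 0 0) :
    27 * A 0 0 ^ 3 ≤ 64 * A.det := by
  have hleading : 3 * A 0 0 ^ 2 ≤ 4 * projGram A 1 1 := by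
    simpa only [projGram, sq] using h.leading.three_mul_sq_le
  have hsq : (3 * A 0 0 ^ 2) ^ 2 ≤ (4 * projGram A 1 1) ^ 2 :=
    pow_le_pow_left₀ (by positivity) hleading 2
  refine le_of_mul_le_mul_left ?_ hpos
  linarith [h.three_mul_projGram_sq_le hA]

end HermiteReduced

theorem exists_two_mul_abs_add_mul_le {a : ℤ} (ha : 0 < a) (b : ℤ) :
    ∃ k : ℤ, 2 * |b + k * a| ≤ a := by
  refine ⟨-((2 * b + a) / (2 * a)), ?_⟩
  have hnonneg := Int.emod_nonneg (2 * b + a) (b := 2 * a) (by omega)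
  have hlt := Int.emod_lt_of_pos (2 * b + a) (b := 2 * a) (by omega)
  have hdiv := Int.emod_add_mul_ediv (2 * b + a) (2 * a)
  have habs : |2 * (b + -((2 * b + a) / (2 * a)) * a)| ≤ a :=
    abs_le.mpr ⟨by linarith, by linarith⟩
  rwa [abs_mul, abs_two] at habs

variable {A : Matrix (Fin 3) (Fin 3) ℤ}

theorem exists_isCongruent_size_reduced (hA : A.PosDef) :
    ∃ B, IsCongruent A B ∧ B 0 0 = A 0 0 ∧ projGram B 1 1 = projGram A 1 1 ∧
      2 * |B 0 1| ≤ B 0 0 ∧ 2 * |projGram B 1 2| ≤ projGram B 1 1 := by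
  have hsymm := isSymm_of_posDef hA
  obtain ⟨j, hj⟩ := exists_two_mul_abs_add_mul_le hA.diag_pos (A 0 1)
  obtain ⟨k, hk⟩ := exists_two_mul_abs_add_mul_le (projGram_one_one_pos hA) (projGram A 1 2)
  let U : Matrix (Fin 3) (Fin 3) ℤ := !![1, j, 0; 0, 1, k; 0, 0, 1]
  have h00 : (Uᵀ * A * U) 0 0 = A 0 0 := by
    simp only [U, mul_apply, transpose_apply, Fin.sum_univ_three, of_apply, cons_val]
    ring
  have h01 : (Uᵀ * A * U) 0 1 = A 0 1 + j * A 0 0 := by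
    simp only [U, mul_apply, transpose_apply, Fin.sum_univ_three, of_apply, cons_val]
    ring
  have h11 : projGram (Uᵀ * A * U) 1 1 = projGram A 1 1 := by
    simp only [U, projGram, mul_apply, transpose_apply, Fin.sum_univ_three, of_apply, cons_val,
      hsymm.apply 0 1]
    ring
  have h12 : projGram (Uᵀ * A * U) 1 2 = projGram A 1 2 + k * projGram A 1 1 := by
    simp only [U, projGram, mul_apply, transpose_apply, Fin.sum_univ_three, of_apply, cons_val,
      hsymm.apply 0 1]
    ring
  refine ⟨Uᵀ * A * U, .of_det_isUnit (by simp [U, det_fin_three]), h00, h11, ?_, ?_⟩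
  · rwa [h00, h01]
  · rwa [h11, h12]

theorem exists_isCongruent_hermiteReduced (hA : A.PosDef) :
    ∃ B, IsCongruent A B ∧ HermiteReduced B := by
  let size (B : Matrix (Fin 3) (Fin 3) ℤ) : ℕ ×ₗ ℕ :=
    toLex ((B 0 0).toNat, (projGram B 1 1).toNat)
  obtain ⟨B, hAB, hmin⟩ := WellFounded.has_min (InvImage.wf size wellFounded_lt)
    {B | IsCongruent A B} ⟨A, .refl A⟩
  obtain ⟨C, hBC, h00, h11, hC01, hC12⟩ := exists_isCongruent_size_reduced (hAB.posDef hA)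
  have hAC : IsCongruent A C := hAB.trans hBC
  have hCpos : C.PosDef := hAC.posDef hA
  have hminC {D} (hCD : IsCongruent C D) : ¬ size D < size C := by
    simpa only [InvImage, size, h00, h11] using hmin D (hAC.trans hCD)
  refine ⟨C, hAC, ⟨hC01, ?_⟩, ⟨hC12, ?_⟩⟩
  · by_contra! hlt
    refine hminC (.submatrix_perm C (Equiv.swap 0 1)) (Prod.Lex.toLex_lt_toLex.mpr (.inl ?_))
    exact (Int.toNat_lt_toNat hCpos.diag_pos).mpr (by simpa using hlt)
  · by_contra! hlt
    refine hminC (.submatrix_perm C (Equiv.swap 1 2)) (Prod.Lex.toLex_lt_toLex.mpr (.inr ⟨?_, ?_⟩))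
    · simp [Equiv.swap_apply_of_ne_of_ne]
    · refine (Int.toNat_lt_toNat (projGram_one_one_pos hCpos)).mpr ?_
      simpa [projGram, Equiv.swap_apply_of_ne_of_ne] using hlt

end Reduction

section DetThree

variable {A : Matrix (Fin 3) (Fin 3) ℤ}

namespace HermiteReduced

theorem apply_zero_eq_of_det_eq_three (h : HermiteReduced A) (hA : A.PosDef) (hdet : A.det = 3) :
    A 0 0 = 1 ∧ A 0 1 = 0 := by
  have hpos : 0 < A 0 0 := hA.diag_pos
  have hcube := h.twentySeven_mul_pow_three_le (isSymm_of_posDef hA) hpos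
  have h00 : A 0 0 = 1 := by
    by_contra hne
    have : 2 ^ 3 ≤ A 0 0 ^ 3 := pow_le_pow_left₀ zero_le_two (by omega) 3
    omega
  have := h.leading.two_mul_abs_le
  exact ⟨h00, Int.abs_lt_one_iff.mp (by omega)⟩

theorem entries_of_det_eq_three (h : HermiteReduced A) (hA : A.PosDef) (hdet : A.det = 3) :
    A 1 1 = 1 ∧ A 1 2 = 0 ∧ A 2 2 = A 0 2 ^ 2 + 3 ∨
      A 1 1 = 2 ∧ A 1 2 ^ 2 = 1 ∧ A 2 2 = A 0 2 ^ 2 + 2 := by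
  have hsymm := isSymm_of_posDef hA
  obtain ⟨h00, h01⟩ := h.apply_zero_eq_of_det_eq_three hA hdet
  have hproj11 : projGram A 1 1 = A 1 1 := by simp [projGram, h00, h01]
  have hproj12 : projGram A 1 2 = A 1 2 := by simp [projGram, h00, h01]
  have hproj22 : projGram A 2 2 = A 2 2 - A 0 2 ^ 2 := by simp [projGram, h00, sq]
  have hpos : 0 < A 1 1 := hA.diag_pos
  have hsq : 3 * A 1 1 ^ 2 ≤ 12 := by
    simpa [hproj11, h00, hdet] using h.three_mul_projGram_sq_le hsymm
  have hred : 2 * |A 1 2| ≤ A 1 1 := by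
    simpa only [hproj11, hproj12] using h.projected.two_mul_abs_le
  have hminor : A 1 1 * (A 2 2 - A 0 2 ^ 2) - A 1 2 ^ 2 = 3 := by
    simpa [hproj11, hproj12, hproj22, h00, hdet] using projGram_mul_sub_sq hsymm
  have hle : A 1 1 ≤ 2 := by nlinarith
  obtain h11 | h11 : A 1 1 = 1 ∨ A 1 1 = 2 := by omega
  · have h12 : A 1 2 = 0 := Int.abs_lt_one_iff.mp (by omega)
    rw [h11, h12] at hminor
    exact .inl ⟨h11, h12, by linarith⟩
  · have h12 : A 1 2 ^ 2 ≤ 1 := (sq_le_one_iff_abs_le_one _).mpr (by omega)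
    have hnonneg := sq_nonneg (A 1 2)
    rw [h11] at hminor
    exact .inr ⟨h11, by omega, by omega⟩

end HermiteReduced

theorem isCongruent_of_posDef_of_det_eq_three (hA : A.PosDef) (hdet : A.det = 3) :
    IsCongruent A !![1, 0, 0; 0, 1, 0; 0, 0, 3] ∨
      IsCongruent A !![1, 0, 0; 0, 2, 1; 0, 1, 2] := by
  obtain ⟨B, hAB, hB⟩ := exists_isCongruent_hermiteReduced hA
  have hBpos := hAB.posDef hA
  have hBsymm := isSymm_of_posDef hBpos
  have hBdet : B.det = 3 := hAB.det_eq.trans hdet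
  obtain ⟨h00, h01⟩ := hB.apply_zero_eq_of_det_eq_three hBpos hBdet
  obtain ⟨h11, h12, h22⟩ | ⟨h11, h12, h22⟩ := hB.entries_of_det_eq_three hBpos hBdet
  · let U : Matrix (Fin 3) (Fin 3) ℤ := !![1, 0, -B 0 2; 0, 1, 0; 0, 0, 1]
    refine .inl (hAB.trans ⟨U, (isUnit_iff_isUnit_det U).mpr (by simp [U, det_fin_three]), ?_⟩)
    ext i j
    fin_cases i <;> fin_cases j <;>
      simp only [U, mul_apply, transpose_apply, Fin.sum_univ_three, of_apply, cons_val,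
        Fin.zero_eta, Fin.mk_one, Fin.reduceFinMk, hBsymm.apply 0 1, hBsymm.apply 0 2,
        hBsymm.apply 1 2, h00, h01, h11, h12, h22] <;>
      ring
  · let U : Matrix (Fin 3) (Fin 3) ℤ := !![1, 0, -(B 1 2 * B 0 2); 0, 1, 0; 0, 0, B 1 2]
    have hU : IsUnit U.det := by
      simpa [U, det_fin_three] using IsUnit.of_pow_eq_one h12 two_ne_zero
    refine .inr (hAB.trans ⟨U, (isUnit_iff_isUnit_det U).mpr hU, ?_⟩)
    ext i j
    fin_cases i <;> fin_cases j <;>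
      simp only [U, mul_apply, transpose_apply, Fin.sum_univ_three, of_apply, cons_val,
        Fin.zero_eta, Fin.mk_one, Fin.reduceFinMk, hBsymm.apply 0 1, hBsymm.apply 0 2,
        hBsymm.apply 1 2, h00, h01, h11, h22] <;>
      grind

theorem Represents.eq_sq_add_of_det_eq_three {m : ℤ} (hm : Represents A m) (hA : A.PosDef)
    (hdet : A.det = 3) :
    (∃ x y z : ℤ, m = x ^ 2 + y ^ 2 + 3 * z ^ 2) ∨
      ∃ x y z : ℤ, m = x ^ 2 + 2 * (y ^ 2 + y * z + z ^ 2) := by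
  refine (isCongruent_of_posDef_of_det_eq_three hA hdet).imp (fun h => ?_) fun h => ?_
  all_goals
    obtain ⟨v, rfl⟩ := h.represents hm
    refine ⟨v 0, v 1, v 2, ?_⟩
    simp only [dotProduct, mulVec, Fin.sum_univ_three, of_apply, cons_val]
    ring

end DetThree

section Existence

theorem jacobiSym_neg_three {b : ℕ} (hb : Odd b) : J(-3 | b) = J(b | 3) := by
  have hrec := jacobiSym.quadratic_reciprocity (a := 3) (by decide) hb
  rw [jacobiSym.neg _ hb, ZMod.χ₄_eq_neg_one_pow (Nat.odd_iff.mp hb)]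
  push_cast at hrec
  rw [hrec, ← mul_assoc, ← pow_add, Even.neg_one_pow ⟨b / 2, by omega⟩, one_mul]

theorem isSquare_neg_four_mul {q E : ℕ} (hq : q.Prime) (hq4 : q % 4 = 1) (hE : E % 6 = 1)
    (hdvd : E ∣ q + 3) : IsSquare (-(4 * E) : ZMod q) := by
  have : Fact q.Prime := ⟨hq⟩
  have hodd : Odd E := Nat.odd_iff.mpr (by omega)
  have hmod : (q : ℤ) ≡ -3 [ZMOD E] :=
    (Int.modEq_iff_dvd.mpr (by simpa using Int.natCast_dvd_natCast.mpr hdvd)).symm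
  have hJ : J(E | q) = 1 := by
    calc J(E | q) = J(q | E) := jacobiSym.quadratic_reciprocity_one_mod_four' hodd hq4
      _ = J(-3 | E) := jacobiSym.mod_left' hmod
      _ = J(E | 3) := jacobiSym_neg_three hodd
      _ = J(1 | 3) := jacobiSym.mod_left' (by omega)
      _ = 1 := jacobiSym.one_left 3
  have hneg : IsSquare (-1 : ZMod q) := ZMod.exists_sq_eq_neg_one_iff.mpr (by omega)
  have hE : IsSquare (E : ZMod q) := by simpa using ZMod.isSquare_of_jacobiSym_eq_one hJ
  have hfour : IsSquare (4 : ZMod q) := ⟨2, by norm_num⟩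
  simpa using hneg.mul (hfour.mul hE)

theorem coprime_four_mul_sub_three {N : ℕ} (hN : ¬3 ∣ N) : (4 * N - 3).Coprime (24 * N) := by
  have h3N : Nat.Coprime 3 (4 * N) := Nat.prime_three.coprime_iff_not_dvd.mpr (by omega)
  have h4N : (4 * N - 3).Coprime (4 * N) := (Nat.coprime_self_sub_left (by omega)).mpr h3N
  have h2 : (4 * N - 3).Coprime 2 := h4N.coprime_dvd_right ⟨2 * N, by ring⟩
  have h3 : (4 * N - 3).Coprime 3 := (Nat.prime_three.coprime_iff_not_dvd.mpr (by omega)).symm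
  rw [show 24 * N = 2 * 3 * (4 * N) by ring]
  exact (h2.mul_right h3).mul_right h4N

theorem exists_prime_add_three_eq {N : ℕ} (hN : ¬3 ∣ N) :
    ∃ q k : ℕ, q.Prime ∧ q + 3 = 4 * N * (6 * k + 1) := by
  obtain ⟨q, hgt, hq, hmod⟩ := Nat.forall_exists_prime_gt_and_modEq (4 * N) (q := 24 * N)
    (by omega) (coprime_four_mul_sub_three hN)
  obtain ⟨k, hk⟩ := (Nat.modEq_iff_dvd' (by omega)).mp hmod.symm
  refine ⟨q, k, hq, ?_⟩
  have : 4 * N * (6 * k + 1) = 24 * N * k + 4 * N := by ring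
  omega

theorem exists_posDef_det_eq_three_represents {N : ℕ} (hN : ¬3 ∣ N) :
    ∃ A : Matrix (Fin 3) (Fin 3) ℤ, A.PosDef ∧ A.det = 3 ∧ Represents A N := by
  obtain ⟨q, k, hq, hqk⟩ := exists_prime_add_three_eq hN
  obtain ⟨r, hr⟩ := isSquare_neg_four_mul hq (by grind) (by omega : (6 * k + 1) % 6 = 1)
    (Dvd.intro_left _ hqk.symm)
  obtain ⟨b, rfl⟩ := ZMod.intCast_surjective r
  obtain ⟨a, ha⟩ : (q : ℤ) ∣ b ^ 2 + 4 * (6 * k + 1) := by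
    rw [← ZMod.intCast_zmod_eq_zero_iff_dvd]
    push_cast at hr ⊢
    linear_combination -hr
  have hqpos : (0 : ℤ) < q := mod_cast hq.pos
  have hapos : 0 < a := pos_of_mul_pos_right (ha ▸ by positivity) hqpos.le
  -- The determinant is `N (a q - b²) - q`, which is why `q + 3` has to be a multiple of `N`.
  let A : Matrix (Fin 3) (Fin 3) ℤ := !![a, b, 1; b, q, 0; 1, 0, N]
  have hsymm : A.IsSymm := by
    ext i j
    fin_cases i <;> fin_cases j <;> rfl
  have hproj : projGram A 1 1 = 4 * (6 * k + 1) := by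
    simp only [projGram, A, of_apply, cons_val]
    linear_combination -ha
  have hdet : A.det = 3 := by
    simp only [det_fin_three, A, of_apply, cons_val]
    zify at hqk
    linear_combination -N * ha - hqk
  exact ⟨A, posDef_of_leading_minors_pos hsymm hapos (hproj ▸ by positivity) (hdet ▸ zero_lt_three),
    hdet, represents_diag A 2⟩

end Existence

section SqAddThreeMulSq

theorem sq_add_two_mul_emod_eight_ne_five (x y z : ℤ) :
    (x ^ 2 + 2 * (y ^ 2 + y * z + z ^ 2)) % 8 ≠ 5 := by
  intro h
  have key : ∀ x y z : ZMod 8, x ^ 2 + 2 * (y ^ 2 + y * z + z ^ 2) ≠ 5 := by decide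
  exact key x y z (mod_cast (ZMod.intCast_eq_intCast_iff' _ 5 8).mpr h)

theorem exists_eq_sq_add_sq_add_three_mul_sq {N : ℕ} (h3 : ¬3 ∣ N) (h8 : N % 8 = 5) :
    ∃ x y z : ℤ, (N : ℤ) = x ^ 2 + y ^ 2 + 3 * z ^ 2 := by
  obtain ⟨A, hA, hdet, hAN⟩ := exists_posDef_det_eq_three_represents h3
  refine (hAN.eq_sq_add_of_det_eq_three hA hdet).resolve_right ?_
  rintro ⟨x, y, z, h⟩
  exact sq_add_two_mul_emod_eight_ne_five x y z (by omega)

theorem sq_emod_three (x : ℤ) : 3 ∣ x ∧ x ^ 2 % 3 = 0 ∨ ¬3 ∣ x ∧ x ^ 2 % 3 = 1 := by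
  have : x % 3 = 0 ∨ x % 3 = 1 ∨ x % 3 = 2 := by omega
  rcases this with hx | hx | hx <;> simp [Int.dvd_iff_emod_eq_zero, sq, Int.mul_emod, hx]

theorem sq_emod_eight (x : ℤ) :
    Odd x ∧ x ^ 2 % 8 = 1 ∨ x % 4 = 2 ∧ x ^ 2 % 8 = 4 ∨ x % 4 = 0 ∧ x ^ 2 % 8 = 0 := by
  rw [Int.odd_iff, sq, Int.mul_emod]
  have : x % 8 < 8 := Int.emod_lt_of_pos x (by norm_num)
  have : 0 ≤ x % 8 := Int.emod_nonneg x (by norm_num)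
  interval_cases hx : x % 8 <;> omega

theorem exists_odd_sq_add_three_mul_sq_eq {y z : ℤ} (h : (y ^ 2 + 3 * z ^ 2) % 8 = 4) :
    ∃ u v : ℤ, Odd u ∧ Odd v ∧ u ^ 2 + 3 * v ^ 2 = y ^ 2 + 3 * z ^ 2 := by
  by_cases hy : Odd y
  · have hz : Odd z := by grind [sq_emod_eight y, sq_emod_eight z]
    exact ⟨y, z, hy, hz, rfl⟩
  · obtain ⟨s, t, rfl, rfl, hst⟩ : ∃ s t : ℤ, y = 2 * s ∧ z = 2 * t ∧ (s - t) % 2 = 1 :=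
      ⟨y / 2, z / 2, by grind [sq_emod_eight y, sq_emod_eight z]⟩
    -- `s + 3t - (s - t)√-3` is the product of `2s + 2t√-3` with `(1 - √-3) / 2`.
    exact ⟨s + 3 * t, s - t, Int.odd_iff.mpr (by omega), Int.odd_iff.mpr hst, by ring⟩

theorem exists_odd_not_three_dvd_sq_add_three_mul_sq_eq {u v : ℤ} (hu : Odd u) (hv : Odd v)
    (hu3 : ¬3 ∣ u) :
    ∃ u' v' : ℤ, Odd u' ∧ ¬3 ∣ u' ∧ Odd v' ∧ ¬3 ∣ v' ∧
      u' ^ 2 + 3 * v' ^ 2 = u ^ 2 + 3 * v ^ 2 := by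
  by_cases hv3 : 3 ∣ v
  · wlog huv : (u - v) % 4 = 2 generalizing v
    · rw [Int.odd_iff] at hu hv
      rw [← neg_sq v]
      exact this (Int.odd_iff.mpr (by omega)) (by omega) (by omega)
    obtain ⟨t, rfl⟩ : ∃ t, u = v + 2 * t := ⟨(u - v) / 2, by omega⟩
    rw [Int.odd_iff] at hv
    -- `t + 2v - t√-3` is the product of `u + v√-3` with `(1 - √-3) / 2`.
    exact ⟨t + 2 * v, t, Int.odd_iff.mpr (by omega), by omega, Int.odd_iff.mpr (by omega),
      by omega, by ring⟩
  · exact ⟨u, v, hu, hu3, hv, hv3, rfl⟩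

theorem exists_odd_eq_sq_add_sq_add_three_mul_sq {N : ℕ} (h3 : ¬3 ∣ N) (h8 : N % 8 = 5) :
    ∃ x y z : ℤ, Odd x ∧ Odd y ∧ Odd z ∧ (N : ℤ) = x ^ 2 + y ^ 2 + 3 * z ^ 2 := by
  obtain ⟨x, y, z, h⟩ := exists_eq_sq_add_sq_add_three_mul_sq h3 h8
  wlog hx : Odd x generalizing x y
  · refine this y x (by rw [h]; ring) ?_
    grind [sq_emod_eight x, sq_emod_eight y, sq_emod_eight z]
  · obtain ⟨u, v, hu, hv, huv⟩ :=
      exists_odd_sq_add_three_mul_sq_eq (y := y) (z := z) (by grind [sq_emod_eight x])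
    exact ⟨x, u, v, hx, hu, hv, by linarith⟩

theorem exists_odd_eq_sq_add_three_mul_sq_add_nine_mul_sq {N : ℕ} (h3 : N % 3 = 1)
    (h8 : N % 8 = 5) :
    ∃ u v w : ℤ, Odd u ∧ ¬3 ∣ u ∧ Odd v ∧ Odd w ∧
      (N : ℤ) = u ^ 2 + 3 * v ^ 2 + 9 * w ^ 2 := by
  obtain ⟨x, y, z, hx, hy, hz, h⟩ := exists_odd_eq_sq_add_sq_add_three_mul_sq (by omega) h8
  wlog hy3 : 3 ∣ y generalizing x y
  · exact this y x hy hx (by rw [h]; ring) (by grind [sq_emod_three x, sq_emod_three y])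
  · obtain ⟨w, rfl⟩ := hy3
    exact ⟨x, z, w, hx, by grind [sq_emod_three x], hz, by grind, by rw [h]; ring⟩

theorem exists_coprime_six_eq_sq_add_three_mul_sq_add_nine_mul_sq {N : ℕ} (h3 : N % 3 = 1)
    (h8 : N % 8 = 5) :
    ∃ u v w : ℤ, (Odd u ∧ ¬3 ∣ u) ∧ (Odd v ∧ ¬3 ∣ v) ∧ (Odd w ∧ ¬3 ∣ w) ∧
      (N : ℤ) = u ^ 2 + 3 * v ^ 2 + 9 * w ^ 2 := by
  obtain ⟨u, v, w, hu, hu3, hv, hw, h⟩ :=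
    exists_odd_eq_sq_add_three_mul_sq_add_nine_mul_sq h3 h8
  obtain ⟨a, b, ha, ha3, hb, hb3, hab⟩ :=
    exists_odd_not_three_dvd_sq_add_three_mul_sq_eq hu hv hu3
  obtain ⟨c, d, hc, hc3, hd, hd3, hcd⟩ :=
    exists_odd_not_three_dvd_sq_add_three_mul_sq_eq hb hw hb3
  exact ⟨a, c, d, ⟨ha, ha3⟩, ⟨hc, hc3⟩, ⟨hd, hd3⟩, by linarith⟩

end SqAddThreeMulSq

section Pentagonal

theorem twentyFour_mul_p5_add_one (x : ℤ) : 24 * p5 x + 1 = (6 * x - 1) ^ 2 := by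
  have heven : 2 ∣ 3 * x ^ 2 - x := by
    rw [show 3 * x ^ 2 - x = x * (x + 1) + 2 * (x ^ 2 - x) by ring]
    exact dvd_add (Int.even_mul_succ_self x).two_dvd (dvd_mul_right 2 _)
  have hp5 : 2 * p5 x = 3 * x ^ 2 - x := Int.mul_ediv_cancel' heven
  linear_combination 12 * hp5

theorem exists_twentyFour_mul_p5_add_one_eq_sq {u : ℤ} (hu : Odd u) (hu3 : ¬3 ∣ u) :
    ∃ x : ℤ, 24 * p5 x + 1 = u ^ 2 := by
  simp only [twentyFour_mul_p5_add_one]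
  rw [Int.odd_iff] at hu
  obtain hmod | hmod : u % 6 = 5 ∨ u % 6 = 1 := by omega
  · exact ⟨(u + 1) / 6, congrArg (· ^ 2) (by omega)⟩
  · refine ⟨(1 - u) / 6, ?_⟩
    rw [← neg_sq u]
    exact congrArg (· ^ 2) (by omega)

end Pentagonal

theorem p5_add_3p5_add_9p5_universal (n : ℕ) :
    ∃ x y z : ℤ, (n : ℤ) = p5 x + 3 * p5 y + 9 * p5 z := by
  obtain ⟨u, v, w, ⟨hu, hu3⟩, ⟨hv, hv3⟩, ⟨hw, hw3⟩, h⟩ :=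
    exists_coprime_six_eq_sq_add_three_mul_sq_add_nine_mul_sq
      (N := 24 * n + 13) (by omega) (by omega)
  obtain ⟨x, hx⟩ := exists_twentyFour_mul_p5_add_one_eq_sq hu hu3
  obtain ⟨y, hy⟩ := exists_twentyFour_mul_p5_add_one_eq_sq hv hv3
  obtain ⟨z, hz⟩ := exists_twentyFour_mul_p5_add_one_eq_sq hw hw3
  refine ⟨x, y, z, ?_⟩
  push_cast at h
  linarith
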